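/- Let δ ≥ 0, T ≥ 0 and β ≥ 0 be real numbers, let λ be a probability measure on the interval [0,δ], and let g : ℝ → [0,∞] be Borel measurable. Then ∫₀^T e^{βs} (∫_{[0,δ]} g(s+u) dλ(u)) ds ≤ ∫₀^{T+δ} e^{βs} g(s) ds. -/

import Mathlib

open MeasureTheory

/-- Exchange inequality for anticipated terms: for a probability measure `λ`
supported on `[0,δ]` and a Borel measurable `g : ℝ → [0,∞]`,
`∫₀^T e^{βs} (∫_{[0,δ]} g(s+u) dλ(u)) ds ≤ ∫₀^{T+δ} e^{βs} g(s) ds`. -/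
theorem lintegral_anticipated_le (δ T β : ℝ) (hδ : 0 ≤ δ) (hT : 0 ≤ T) (hβ : 0 ≤ β)
    (lam : Measure ℝ) [IsProbabilityMeasure lam] (hsupp : lam (Set.Icc 0 δ)ᶜ = 0)
    (g : ℝ → ENNReal) (hg : Measurable g) :
    ∫⁻ s in Set.Icc (0 : ℝ) T,
        ENNReal.ofReal (Real.exp (β * s)) * ∫⁻ u in Set.Icc (0 : ℝ) δ, g (s + u) ∂lam
      ≤ ∫⁻ s in Set.Icc (0 : ℝ) (T + δ), ENNReal.ofReal (Real.exp (β * s)) * g s := by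
  set F : ℝ → ENNReal := fun s => ENNReal.ofReal (Real.exp (β * s)) * g s with hF
  have hFm : Measurable F := by
    apply Measurable.mul _ hg
    fun_prop
  set I := ∫⁻ s in Set.Icc (0 : ℝ) (T + δ), F s with hI
  have h1 : ∀ s, ENNReal.ofReal (Real.exp (β * s)) * ∫⁻ u in Set.Icc (0 : ℝ) δ, g (s + u) ∂lam
      ≤ ∫⁻ u in Set.Icc (0 : ℝ) δ, F (s + u) ∂lam := by
    intro s
    rw [← lintegral_const_mul _ (by fun_prop)]
    apply setLIntegral_mono' measurableSet_Icc
    intro u hu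
    simp only [hF]
    gcongr
    linarith [hu.1]
  have h2 : ∀ u ∈ Set.Icc (0 : ℝ) δ, ∫⁻ s in Set.Icc (0 : ℝ) T, F (s + u) ≤ I := by
    intro u hu
    rw [hI, ← lintegral_indicator measurableSet_Icc, ← lintegral_indicator measurableSet_Icc,
      ← lintegral_add_right_eq_self ((Set.Icc (0 : ℝ) (T + δ)).indicator F) u]
    apply lintegral_mono
    intro s
    by_cases hs : s ∈ Set.Icc (0 : ℝ) T
    · have hs' : s + u ∈ Set.Icc (0 : ℝ) (T + δ) :=
        ⟨by linarith [hs.1, hu.1], by linarith [hs.2, hu.2]⟩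
      simp only [Set.indicator_of_mem hs, Set.indicator_of_mem hs', le_refl]
    · simp only [Set.indicator_of_notMem hs, zero_le]
  calc _ ≤ ∫⁻ s in Set.Icc (0 : ℝ) T, ∫⁻ u in Set.Icc (0 : ℝ) δ, F (s + u) ∂lam :=
        lintegral_mono h1
    _ = ∫⁻ u in Set.Icc (0 : ℝ) δ, (∫⁻ s in Set.Icc (0 : ℝ) T, F (s + u)) ∂lam :=
        lintegral_lintegral_swap
          (hFm.comp (measurable_fst.add measurable_snd)).aemeasurable
    _ ≤ ∫⁻ u in Set.Icc (0 : ℝ) δ, I ∂lam := setLIntegral_mono' measurableSet_Icc h2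
    _ = I * lam (Set.Icc 0 δ) := setLIntegral_const _ _
    _ ≤ I * 1 := by gcongr; exact prob_le_one
    _ = I := mul_one _
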